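/- arXiv:2110.12907 — 11 statements merged into one kernel-verified Lean document; each statement's English description precedes it below -/
import Mathlib

section
/- For every Lebesgue-integrable h : ℝ^m → ℝ, the HMC operator conserves the integral: ∫_{ℝ^m} (T h)(q) dq = ∫_{ℝ^m} h(q) dq. -/
open MeasureTheory

/-- The HMC operator conserves the integral:
`∫ q, (T h) q = ∫ q, h q` for every Lebesgue-integrable `h`. -/
theorem hmc_operator_conserves_integral
    (m : ℕ) (hm : 1 ≤ m)
    (f g : EuclideanSpace ℝ (Fin m) → ℝ)
    (hf_meas : Measurable f)
    (hf_pos : ∀ᵐ q : EuclideanSpace ℝ (Fin m), 0 < f q)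
    (hf_int : Integrable f)
    (hf_int_pos : 0 < ∫ q, f q)
    (hg_meas : Measurable g)
    (hg_nonneg : ∀ p, 0 ≤ g p)
    (hg_int : (∫ p, g p) = 1)
    (R : EuclideanSpace ℝ (Fin m) × EuclideanSpace ℝ (Fin m) →
         EuclideanSpace ℝ (Fin m) × EuclideanSpace ℝ (Fin m))
    (hR_bij : Function.Bijective R)
    (hR_mp : MeasurePreserving R volume volume)
    (hinv : ∀ q p : EuclideanSpace ℝ (Fin m),
      f (R (q, p)).1 * g (R (q, p)).2 = f q * g p)
    (h : EuclideanSpace ℝ (Fin m) → ℝ) (hh_int : Integrable h) :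
    (∫ q, ∫ p, h (R (q, p)).1 * g (R (q, p)).2) = ∫ q, h q := by
  have hg : Integrable g := by
    by_contra hng
    rw [integral_undef hng] at hg_int
    exact zero_ne_one hg_int
  have hF : Integrable
      (fun z : EuclideanSpace ℝ (Fin m) × EuclideanSpace ℝ (Fin m) => h z.1 * g z.2)
      (volume.prod volume) := hh_int.mul_prod hg
  have hemb : MeasurableEmbedding R := hR_mp.measurable.measurableEmbedding hR_bij.injective
  have hFR : Integrable
      (fun z : EuclideanSpace ℝ (Fin m) × EuclideanSpace ℝ (Fin m) =>
        h (R z).1 * g (R z).2) (volume.prod volume) :=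
    (hR_mp.integrable_comp_emb hemb).2 hF
  calc (∫ q, ∫ p, h (R (q, p)).1 * g (R (q, p)).2)
      = ∫ z, h (R z).1 * g (R z).2 ∂(volume.prod volume) := (integral_prod _ hFR).symm
    _ = ∫ z : EuclideanSpace ℝ (Fin m) × EuclideanSpace ℝ (Fin m),
          h z.1 * g z.2 ∂(volume.prod volume) :=
        hR_mp.integral_comp hemb (fun z => h z.1 * g z.2)
    _ = (∫ q, h q) * ∫ p, g p := integral_prod_mul h g
    _ = ∫ q, h q := by rw [hg_int, mul_one]
end

section
/- For every measurable h : ℝ^m → ℝ with ∫ h(q)²/f(q) dq < ∞, one has ∫ (T h)(q)²/f(q) dq ≤ ∫ h(q)²/f(q) dq; that is, the HMC operator T does not increase the weighted L² norm: ‖T h‖ ≤ ‖h‖. -/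
open MeasureTheory

/-- The HMC operator does not increase the weighted `L²` norm:
`∫ q, (T h q)² / f q ≤ ∫ q, (h q)² / f q`. -/
theorem hmc_operator_nonexpansive_weighted_L2
    (m : ℕ) (hm : 1 ≤ m)
    (f g : EuclideanSpace ℝ (Fin m) → ℝ)
    (hf_meas : Measurable f)
    (hf_pos : ∀ᵐ q : EuclideanSpace ℝ (Fin m), 0 < f q)
    (hf_int : Integrable f)
    (hf_int_pos : 0 < ∫ q, f q)
    (hg_meas : Measurable g)
    (hg_nonneg : ∀ p, 0 ≤ g p)
    (hg_int : (∫ p, g p) = 1)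
    (R : EuclideanSpace ℝ (Fin m) × EuclideanSpace ℝ (Fin m) →
         EuclideanSpace ℝ (Fin m) × EuclideanSpace ℝ (Fin m))
    (hR_bij : Function.Bijective R)
    (hR_mp : MeasurePreserving R volume volume)
    (hinv : ∀ q p : EuclideanSpace ℝ (Fin m),
      f (R (q, p)).1 * g (R (q, p)).2 = f q * g p)
    (h : EuclideanSpace ℝ (Fin m) → ℝ) (hh_meas : Measurable h)
    (hh_L2 : Integrable (fun q => h q ^ 2 / f q)) :
    (∫ q, (∫ p, h (R (q, p)).1 * g (R (q, p)).2) ^ 2 / f q) ≤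
      ∫ q, h q ^ 2 / f q := by
  have hg_integrable : Integrable g := by
    by_contra hc
    rw [integral_undef hc] at hg_int
    exact zero_ne_one hg_int
  have hG : Integrable (fun z : EuclideanSpace ℝ (Fin m) × EuclideanSpace ℝ (Fin m) =>
      (h z.1 ^ 2 / f z.1) * g z.2) (volume.prod volume) := hh_L2.mul_prod hg_integrable
  have hmp : MeasurePreserving R (volume.prod volume) (volume.prod volume) := hR_mp
  have hF : Integrable (fun z => (h (R z).1 ^ 2 / f (R z).1) * g (R z).2)
      (volume.prod volume) :=
    (hmp.integrable_comp hG.aestronglyMeasurable).2 hG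
  have hFint : ∫ z, (h (R z).1 ^ 2 / f (R z).1) * g (R z).2 ∂(volume.prod volume)
      = ∫ q, h q ^ 2 / f q := by
    have h1 : ∫ z, (h z.1 ^ 2 / f z.1) * g z.2 ∂(volume.prod volume)
      = ∫ q, h q ^ 2 / f q := by
      rw [integral_prod_mul (fun q => h q ^ 2 / f q) g, hg_int, mul_one]
    rw [← h1]
    conv_rhs => rw [← hmp.map_eq]
    rw [integral_map hmp.measurable.aemeasurable]
    rw [hmp.map_eq]
    exact hG.aestronglyMeasurable
  have hpos : ∀ᵐ z ∂((volume : Measure (EuclideanSpace ℝ (Fin m))).prod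
      (volume : Measure (EuclideanSpace ℝ (Fin m)))), 0 < f (R z).1 :=
    hmp.quasiMeasurePreserving.ae
      ((Measure.quasiMeasurePreserving_fst (μ := volume) (ν := volume)).ae hf_pos)
  rw [← hFint, integral_prod _ hF]
  apply integral_mono_of_nonneg
  · filter_upwards [hf_pos] with q hq
    exact div_nonneg (sq_nonneg _) hq.le
  · exact hF.integral_prod_left
  filter_upwards [hf_pos, Measure.ae_ae_of_ae_prod hpos, hF.prod_right_ae] with q hq hp hY
  by_cases hX : Integrable (fun p => h (R (q, p)).1 * g (R (q, p)).2)
  · set I := ∫ p, h (R (q, p)).1 * g (R (q, p)).2 with hI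
    have key : ∫ p, (2 * (I / f q) * (h (R (q, p)).1 * g (R (q, p)).2)
        - (I / f q) ^ 2 * f q * g p) ≤
        ∫ p, (h (R (q, p)).1 ^ 2 / f (R (q, p)).1) * g (R (q, p)).2 := by
      apply integral_mono_ae ((hX.const_mul _).sub (hg_integrable.const_mul _)) hY
      filter_upwards [hp] with p hp
      have e := hinv q p
      have hg' := hg_nonneg (R (q, p)).2
      show 2 * (I / f q) * (h (R (q, p)).1 * g (R (q, p)).2) - (I / f q) ^ 2 * f q * g p ≤
        (h (R (q, p)).1 ^ 2 / f (R (q, p)).1) * g (R (q, p)).2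
      generalize I / f q = c
      generalize h (R (q, p)).1 = a at *
      generalize g (R (q, p)).2 = b at *
      generalize f (R (q, p)).1 = d at *
      have : a ^ 2 / d * b - (2 * c * (a * b) - c ^ 2 * f q * g p) = b / d * (a - c * d) ^ 2 := by
        rw [mul_assoc (c ^ 2), ← e]
        field_simp
        ring
      have h2 : 0 ≤ b / d * (a - c * d) ^ 2 := by positivity
      linarith
    rw [integral_sub (hX.const_mul _) (hg_integrable.const_mul _), integral_const_mul,
      integral_const_mul, hg_int, ← hI] at key
    refine le_trans (le_of_eq ?_) key
    field_simp
    ring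
  · simp only [integral_undef hX]
    rw [zero_pow two_ne_zero, zero_div]
    apply integral_nonneg_of_ae
    filter_upwards [hp] with p hp
    exact mul_nonneg (div_nonneg (sq_nonneg _) hp.le) (hg_nonneg _)
end

section
/- If h : ℝ^m → ℝ is measurable with ∫ h²/f < ∞ and the weighted L² norm is preserved, i.e. ∫ (T h)(q)²/f(q) dq = ∫ h(q)²/f(q) dq, then h is a scalar multiple of the target density: there exists α ∈ ℝ such that h(q) = α·f(q) for Lebesgue-a.e. q ∈ ℝ^m. -/
open MeasureTheory

/-- If the HMC operator preserves the weighted `L²` norm of `h`,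
then `h` is (a.e.) a scalar multiple of the target density `f`. -/
theorem hmc_norm_equality_implies_multiple_of_target
    (m : ℕ) (hm : 1 ≤ m)
    (f g : EuclideanSpace ℝ (Fin m) → ℝ)
    (hf_meas : Measurable f)
    (hf_pos : ∀ᵐ q : EuclideanSpace ℝ (Fin m), 0 < f q)
    (hf_int : Integrable f)
    (hf_int_pos : 0 < ∫ q, f q)
    (hg_meas : Measurable g)
    (hg_nonneg : ∀ p, 0 ≤ g p)
    (hg_int : (∫ p, g p) = 1)
    (R : EuclideanSpace ℝ (Fin m) × EuclideanSpace ℝ (Fin m) →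
         EuclideanSpace ℝ (Fin m) × EuclideanSpace ℝ (Fin m))
    (hR_bij : Function.Bijective R)
    (hR_mp : MeasurePreserving R volume volume)
    (hinv : ∀ q p : EuclideanSpace ℝ (Fin m),
      f (R (q, p)).1 * g (R (q, p)).2 = f q * g p)
    -- Coverage property: for a.e. `q`, the push-forward under `p ↦ (R (q,p)).1` of the
    -- measure with density `g` is mutually absolutely continuous with Lebesgue measure.
    (hcov : ∀ᵐ q : EuclideanSpace ℝ (Fin m),
      (Measure.map (fun p => (R (q, p)).1)
          (volume.withDensity fun p => ENNReal.ofReal (g p))) ≪ volume ∧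
      volume ≪ (Measure.map (fun p => (R (q, p)).1)
          (volume.withDensity fun p => ENNReal.ofReal (g p))))
    (h : EuclideanSpace ℝ (Fin m) → ℝ) (hh_meas : Measurable h)
    (hh_L2 : Integrable (fun q => h q ^ 2 / f q))
    (hnorm : (∫ q, (∫ p, h (R (q, p)).1 * g (R (q, p)).2) ^ 2 / f q) =
      ∫ q, h q ^ 2 / f q) :
    ∃ α : ℝ, ∀ᵐ q : EuclideanSpace ℝ (Fin m), h q = α * f q := by
  have hg_i : Integrable g := by
    by_contra hc
    rw [integral_undef hc] at hg_int
    exact zero_ne_one hg_int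
  have hRm : Measurable R := hR_mp.measurable
  let u : EuclideanSpace ℝ (Fin m) → ℝ := fun q => h q / f q
  have hu : Measurable u := hh_meas.div hf_meas
  have huf : ∀ q, u q ^ 2 * f q = h q ^ 2 / f q := by
    intro q
    by_cases hq : f q = 0
    · simp [u, hq]
    · simp only [u]; field_simp
  let ν : Measure (EuclideanSpace ℝ (Fin m)) := volume.withDensity fun p => ENNReal.ofReal (g p)
  have hν : IsProbabilityMeasure ν := by
    constructor
    simp only [ν]
    rw [withDensity_apply _ MeasurableSet.univ, Measure.restrict_univ,
      ← ofReal_integral_eq_lintegral_ofReal hg_i (Filter.Eventually.of_forall hg_nonneg), hg_int]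
    simp
  have hgm : Measurable fun p => ENNReal.ofReal (g p) := hg_meas.ennreal_ofReal
  have hνint : ∀ k : EuclideanSpace ℝ (Fin m) → ℝ, ∫ p, k p ∂ν = ∫ p, k p * g p := by
    intro k
    simp only [ν]
    rw [integral_withDensity_eq_integral_toReal_smul hgm (by simp)]
    refine integral_congr_ae (Filter.Eventually.of_forall fun p => ?_)
    simp [ENNReal.toReal_ofReal (hg_nonneg p), mul_comm]
  have hνI : ∀ k : EuclideanSpace ℝ (Fin m) → ℝ, Integrable (fun p => k p * g p) → Integrable k ν := by
    intro k hk
    simp only [ν]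
    rw [integrable_withDensity_iff_integrable_smul' hgm (by simp)]
    refine hk.congr (Filter.Eventually.of_forall fun p => ?_)
    simp [ENNReal.toReal_ofReal (hg_nonneg p), mul_comm]
  -- the double integral
  let W : EuclideanSpace ℝ (Fin m) × EuclideanSpace ℝ (Fin m) → ℝ := fun z => u (R z).1 ^ 2 * (f z.1 * g z.2)
  let G : EuclideanSpace ℝ (Fin m) × EuclideanSpace ℝ (Fin m) → ℝ := fun z => (h z.1 ^ 2 / f z.1) * g z.2
  have hWG : W = G ∘ R := by
    funext z
    obtain ⟨q, p⟩ := z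
    simp only [W, G, Function.comp]
    rw [← hinv q p, ← huf]; ring
  have hGi : Integrable G (volume.prod volume) := hh_L2.mul_prod hg_i
  have hGi' : Integrable G (volume : Measure (EuclideanSpace ℝ (Fin m) × EuclideanSpace ℝ (Fin m))) := hGi
  have hWi : Integrable W (volume.prod volume) := by
    rw [hWG]; exact hR_mp.integrable_comp_of_integrable hGi'
  have hWint : ∫ z, W z ∂(volume.prod volume) = ∫ q, h q ^ 2 / f q := by
    have h1 : ∫ z, G z ∂((volume : Measure (EuclideanSpace ℝ (Fin m) × EuclideanSpace ℝ (Fin m))).map R) = ∫ z, G (R z) :=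
      integral_map hRm.aemeasurable (by rw [hR_mp.map_eq]; exact hGi'.aestronglyMeasurable)
    rw [hR_mp.map_eq] at h1
    have h2 : ∫ z, G z ∂((volume : Measure (EuclideanSpace ℝ (Fin m))).prod (volume : Measure (EuclideanSpace ℝ (Fin m))))
        = (∫ q, h q ^ 2 / f q) * ∫ p, g p :=
      integral_prod_mul (fun q => h q ^ 2 / f q) g
    rw [hg_int, mul_one] at h2
    rw [hWG, ← h2]
    exact h1.symm
  rw [integral_prod W hWi] at hWint
  -- a.e. identity for the integrand of `T h`
  have hpos2 : ∀ᵐ z ∂((volume : Measure (EuclideanSpace ℝ (Fin m))).prod (volume : Measure (EuclideanSpace ℝ (Fin m)))), 0 < f (R z).1 := by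
    have h1 : ∀ᵐ z ∂((volume : Measure (EuclideanSpace ℝ (Fin m))).prod (volume : Measure (EuclideanSpace ℝ (Fin m)))), 0 < f z.1 :=
      Measure.quasiMeasurePreserving_fst.ae hf_pos
    exact hR_mp.quasiMeasurePreserving.ae h1
  have hpos3 := Measure.ae_ae_of_ae_prod hpos2
  have hTh : ∀ᵐ q : EuclideanSpace ℝ (Fin m), (∫ p, h (R (q, p)).1 * g (R (q, p)).2) =
      f q * ∫ p, u (R (q, p)).1 ∂ν := by
    filter_upwards [hpos3] with q hq
    rw [hνint, ← integral_const_mul]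
    refine integral_congr_ae ?_
    filter_upwards [hq] with p hp
    have := hinv q p
    have h3 : h (R (q, p)).1 = u (R (q, p)).1 * f (R (q, p)).1 := by
      simp only [u]; field_simp
    rw [h3, mul_assoc, this]; ring
  have hsec : ∀ᵐ q : EuclideanSpace ℝ (Fin m), MemLp (fun p => u (R (q, p)).1) 2 ν := by
    filter_upwards [hWi.prod_right_ae, hf_pos] with q hq hfq
    have hmq : Measurable (fun p => u (R (q, p)).1) :=
      hu.comp (measurable_fst.comp (hRm.comp measurable_prodMk_left))
    rw [memLp_two_iff_integrable_sq hmq.aestronglyMeasurable]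
    apply hνI
    refine (hq.const_mul (f q)⁻¹).congr (Filter.Eventually.of_forall fun p => ?_)
    simp only [W]; field_simp
  have hWq : ∀ q : EuclideanSpace ℝ (Fin m), ∫ p, W (q, p) = f q * ∫ p, u (R (q, p)).1 ^ 2 ∂ν := by
    intro q
    rw [hνint, ← integral_const_mul]
    refine integral_congr_ae (Filter.Eventually.of_forall fun p => ?_)
    simp only [W]; ring
  let S : EuclideanSpace ℝ (Fin m) → ℝ := fun q => (∫ p, h (R (q, p)).1 * g (R (q, p)).2) ^ 2 / f q
  have hD : ∀ᵐ q : EuclideanSpace ℝ (Fin m), (∫ p, W (q, p)) - S q =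
      f q * ProbabilityTheory.variance (fun p => u (R (q, p)).1) ν := by
    filter_upwards [hTh, hsec, hf_pos] with q h1 h2 h3
    rw [ProbabilityTheory.variance_eq_sub h2, hWq]
    simp only [S]
    rw [h1]
    simp only [Pi.pow_apply]
    field_simp
  have hDnn : ∀ᵐ q : EuclideanSpace ℝ (Fin m), 0 ≤ (∫ p, W (q, p)) - S q := by
    filter_upwards [hD, hf_pos] with q h1 h2
    rw [h1]
    exact mul_nonneg h2.le (ProbabilityTheory.variance_nonneg _ _)
  have hTmeas : StronglyMeasurable fun q : EuclideanSpace ℝ (Fin m) => ∫ p, h (R (q, p)).1 * g (R (q, p)).2 := by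
    have : StronglyMeasurable fun z : EuclideanSpace ℝ (Fin m) × EuclideanSpace ℝ (Fin m) => h (R z).1 * g (R z).2 :=
      ((hh_meas.comp (measurable_fst.comp hRm)).mul
        (hg_meas.comp (measurable_snd.comp hRm))).stronglyMeasurable
    exact this.integral_prod_right'
  have hSm : Measurable S := (hTmeas.measurable.pow_const 2).div hf_meas
  have hWi1 : Integrable (fun q : EuclideanSpace ℝ (Fin m) => ∫ p, W (q, p)) := hWi.integral_prod_left
  have hSi : Integrable S := by
    refine hWi1.mono' hSm.aestronglyMeasurable ?_
    filter_upwards [hDnn, hf_pos] with q h1 h2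
    rw [Real.norm_of_nonneg (div_nonneg (sq_nonneg _) h2.le)]
    linarith
  have hzero : ∫ q, ((∫ p, W (q, p)) - S q) = 0 := by
    rw [integral_sub hWi1 hSi, hWint]
    exact sub_eq_zero.mpr hnorm.symm
  rw [integral_eq_zero_iff_of_nonneg_ae hDnn (hWi1.sub hSi)] at hzero
  have hfin : ∀ᵐ q : EuclideanSpace ℝ (Fin m), ∃ α : ℝ, ∀ᵐ x : EuclideanSpace ℝ (Fin m), h x = α * f x := by
    filter_upwards [hzero, hD, hsec, hf_pos, hcov] with q h0 h1 h2 h3 h4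
    have hmq : Measurable (fun p => (R (q, p)).1) :=
      measurable_fst.comp (hRm.comp measurable_prodMk_left)
    have hv : ProbabilityTheory.variance (fun p => u (R (q, p)).1) ν = 0 := by
      have h5 : f q * ProbabilityTheory.variance (fun p => u (R (q, p)).1) ν = 0 := by
        rw [← h1]; exact h0
      exact (mul_eq_zero.mp h5).resolve_left h3.ne'
    have hev : ProbabilityTheory.evariance (fun p => u (R (q, p)).1) ν = 0 := by
      rw [← h2.ofReal_variance_eq, hv, ENNReal.ofReal_zero]
    rw [ProbabilityTheory.evariance_eq_zero_iff h2.aestronglyMeasurable.aemeasurable] at hev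
    set α := ∫ p, u (R (q, p)).1 ∂ν with hα
    refine ⟨α, ?_⟩
    have hmap : ∀ᵐ x ∂(Measure.map (fun p => (R (q, p)).1) ν), u x = α := by
      rw [ae_map_iff hmq.aemeasurable (measurableSet_eq_fun hu measurable_const)]
      exact hev
    filter_upwards [h4.2.ae_le hmap, hf_pos] with x hx hfx
    rw [← hx]
    simp only [u]; field_simp
  exact hfin.exists.choose_spec
end

section
/- Let h ∈ H and set S(h) := inf_{n ≥ 0} ‖Tⁿ h‖². If (n_k) is a strictly increasing sequence of natural numbers such that T^{n_k} h converges weakly to some h∞ ∈ H, then ‖h∞‖² = S(h); i.e., every weak accumulation point of the sequence (Tⁿ h) has squared norm equal to S(h). -/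
open Filter
open scoped RealInnerProductSpace

/-- For a self-adjoint nonexpansive continuous linear operator `T` on a real
Hilbert space, every weak accumulation point `hLimit` of the sequence of iterates `Tⁿ h` satisfies
`‖hLimit‖² = S(h) := ⨅ n, ‖Tⁿ h‖²`. -/
theorem weak_accumulation_point_norm_eq_inf
    {H : Type*} [NormedAddCommGroup H] [InnerProductSpace ℝ H] [CompleteSpace H]
    (T : H →L[ℝ] H)
    (hsa : ∀ x y : H, ⟪T x, y⟫ = ⟪x, T y⟫)
    (hne : ∀ x : H, ‖T x‖ ≤ ‖x‖)
    (h : H)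
    (nk : ℕ → ℕ) (hnk : StrictMono nk)
    (hLimit : H)
    (hweak : ∀ y : H,
      Tendsto (fun k => ⟪(T ^ nk k) h, y⟫) atTop (nhds ⟪hLimit, y⟫)) :
    ‖hLimit‖ ^ 2 = ⨅ n : ℕ, ‖(T ^ n) h‖ ^ 2 := by
  have hadj : ∀ (n : ℕ) (x y : H), ⟪(T ^ n) x, y⟫ = ⟪x, (T ^ n) y⟫ := by
    intro n
    induction n with
    | zero => intro x y; simp
    | succ n ih =>
      intro x y
      have h1 : (T ^ (n + 1)) x = (T ^ n) (T x) := by rw [pow_succ]; rfl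
      have h2 : (T ^ (n + 1)) y = T ((T ^ n) y) := by rw [pow_succ']; rfl
      rw [h1, h2, ih, hsa]
  have hadd : ∀ (a b : ℕ) (x : H), (T ^ (a + b)) x = (T ^ a) ((T ^ b) x) := by
    intro a b x
    rw [pow_add]; rfl
  have hinner : ∀ a b c : ℕ, a + b = c + c →
      ⟪(T ^ a) h, (T ^ b) h⟫ = ‖(T ^ c) h‖ ^ 2 := by
    intro a b c e
    rw [hadj, ← hadd, e, hadd, ← hadj, real_inner_self_eq_norm_sq]
  have hanti : Antitone (fun n : ℕ => ‖(T ^ n) h‖ ^ 2) := by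
    apply antitone_nat_of_succ_le
    intro n
    have h2 : (T ^ (n + 1)) h = T ((T ^ n) h) := by rw [pow_succ']; rfl
    rw [h2]
    exact pow_le_pow_left₀ (norm_nonneg _) (hne _) 2
  have hlim : Tendsto (fun n : ℕ => ‖(T ^ n) h‖ ^ 2) atTop
      (nhds (⨅ n : ℕ, ‖(T ^ n) h‖ ^ 2)) := by
    apply tendsto_atTop_ciInf hanti
    exact ⟨0, by rintro _ ⟨n, rfl⟩; positivity⟩
  have hpar : ∃ p, ∃ᶠ k in atTop, nk k % 2 = p := by
    by_contra hcon
    push Not at hcon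
    have h0 := hcon 0
    have h1 := hcon 1
    obtain ⟨k, hk0, hk1⟩ := (h0.and h1).exists
    omega
  obtain ⟨p, hp⟩ := hpar
  obtain ⟨φ, hφ, hφp⟩ := extraction_of_frequently_atTop hp
  have hm : StrictMono (fun k => nk (φ k)) := hnk.comp hφ
  have hw : ∀ y : H, Tendsto (fun k => ⟪(T ^ nk (φ k)) h, y⟫) atTop (nhds ⟪hLimit, y⟫) :=
    fun y => (hweak y).comp hφ.tendsto_atTop
  have key : ∀ j, ⟪hLimit, (T ^ nk (φ j)) h⟫ = ⨅ n : ℕ, ‖(T ^ n) h‖ ^ 2 := by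
    intro j
    refine tendsto_nhds_unique (hw _) ?_
    have hc : Tendsto (fun k => (nk (φ k) + nk (φ j)) / 2) atTop atTop := by
      refine tendsto_atTop.2 fun b => ?_
      filter_upwards [hm.tendsto_atTop.eventually_ge_atTop (2 * b)] with k hk
      omega
    refine (hlim.comp hc).congr fun k => ?_
    refine (hinner _ _ _ ?_).symm
    have h1 := hφp k
    have h2 := hφp j
    dsimp only
    omega
  rw [← real_inner_self_eq_norm_sq]
  refine tendsto_nhds_unique (hw hLimit) ?_
  refine tendsto_const_nhds.congr fun k => ?_
  rw [real_inner_comm, key k]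
end

section
/- For every h ∈ H, the sequence of iterates Tⁿ h converges weakly in H to (ℓ(h)/ℓ(f))·f as n → ∞. -/
open Filter
open scoped RealInnerProductSpace

/-- Under self-adjointness, nonexpansiveness, a fixed point `f`,
rigidity (norm-preserved vectors are multiples of `f`), and a `T`-invariant continuous
linear functional `ℓ` with `ℓ f ≠ 0`, the iterates `Tⁿ h` converge weakly to
`(ℓ h / ℓ f) • f`. -/
theorem iterates_converge_weakly
    {H : Type*} [NormedAddCommGroup H] [InnerProductSpace ℝ H] [CompleteSpace H]
    (T : H →L[ℝ] H)
    (hsa : ∀ x y : H, ⟪T x, y⟫ = ⟪x, T y⟫)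
    (hne : ∀ x : H, ‖T x‖ ≤ ‖x‖)
    (f : H) (hf : T f = f)
    (hrigid : ∀ x : H, ‖T x‖ = ‖x‖ → ∃ c : ℝ, x = c • f)
    (ℓ : H →L[ℝ] ℝ) (hℓ : ∀ x : H, ℓ (T x) = ℓ x) (hℓf : ℓ f ≠ 0)
    (h : H) :
    ∀ y : H,
      Tendsto (fun n => ⟪(T ^ n) h, y⟫) atTop (nhds ⟪(ℓ h / ℓ f) • f, y⟫) := by
  -- inner products of iterates
  have hin : ∀ m n : ℕ, ⟪(T ^ m) h, (T ^ n) h⟫ = ⟪(T ^ (m + n)) h, h⟫ := by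
    intro m n
    induction n generalizing m with
    | zero => simp
    | succ k ih =>
      rw [pow_succ' T k, ContinuousLinearMap.mul_apply, ← hsa,
        ← ContinuousLinearMap.mul_apply, ← pow_succ', ih]
      congr 3
      omega
  set b : ℕ → ℝ := fun n => ⟪(T ^ (2 * n)) h, h⟫ with hb
  have hbn : ∀ n, b n = ‖(T ^ n) h‖ ^ 2 := by
    intro n
    rw [← real_inner_self_eq_norm_sq, hin, ← two_mul]
  have hanti : Antitone b := by
    refine antitone_nat_of_succ_le fun n => ?_
    rw [hbn, hbn, pow_succ' T, ContinuousLinearMap.mul_apply]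
    have := hne ((T ^ n) h)
    gcongr
  have hbdd : BddBelow (Set.range b) := by
    refine ⟨0, ?_⟩
    rintro _ ⟨n, rfl⟩
    rw [hbn]
    positivity
  have hlim := tendsto_atTop_ciInf hanti hbdd
  set L := ⨅ n, b n
  have hdist : ∀ m n : ℕ, ‖(T ^ (2 * m)) h - (T ^ (2 * n)) h‖ ^ 2
      = b (2 * m) - 2 * b (m + n) + b (2 * n) := by
    intro m n
    rw [norm_sub_sq_real, hin, hbn (2 * m), hbn (2 * n)]
    simp only [hb, mul_add]
  have hcau : CauchySeq (fun n => (T ^ (2 * n)) h) := by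
    rw [Metric.cauchySeq_iff]
    intro ε hε
    obtain ⟨N, hN⟩ := (Metric.tendsto_atTop.1 hlim) (ε ^ 2 / 4) (by positivity)
    refine ⟨N, fun m hm n hn => ?_⟩
    rw [dist_eq_norm]
    have h1 := abs_lt.1 (hN (2 * m) (by omega))
    have h2 := abs_lt.1 (hN (2 * n) (by omega))
    have h3 := abs_lt.1 (hN (m + n) (by omega))
    refine lt_of_pow_lt_pow_left₀ 2 hε.le ?_
    rw [hdist]
    linarith [h1.1, h1.2, h2.1, h2.2, h3.1, h3.2]
  obtain ⟨p, hp⟩ := cauchySeq_tendsto_of_complete hcau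
  have hTTp : T (T p) = p := by
    have h1 : Tendsto (fun n => T (T ((T ^ (2 * n)) h))) atTop (nhds (T (T p))) :=
      ((T.continuous.comp T.continuous).tendsto p).comp hp
    have h2 := hp.comp (tendsto_add_atTop_nat 1)
    refine tendsto_nhds_unique h1 (h2.congr fun n => ?_)
    simp only [Function.comp, mul_add, mul_one, pow_succ' T, ContinuousLinearMap.mul_apply]
  have hnorm : ‖T p‖ = ‖p‖ := by
    refine le_antisymm (hne p) ?_
    have := hne (T p)
    rwa [hTTp] at this
  obtain ⟨c, hc⟩ := hrigid p hnorm
  have hTp : T p = p := by rw [hc, map_smul, hf]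
  have hℓn : ∀ n : ℕ, ℓ ((T ^ n) h) = ℓ h := by
    intro n
    induction n with
    | zero => simp
    | succ k ih => rw [pow_succ', ContinuousLinearMap.mul_apply, hℓ, ih]
  have hℓp : ℓ p = ℓ h := by
    refine tendsto_nhds_unique ((ℓ.continuous.tendsto p).comp hp) ?_
    simp only [Function.comp_def, hℓn]
    exact tendsto_const_nhds
  have hpe : p = (ℓ h / ℓ f) • f := by
    have : c * ℓ f = ℓ h := by rw [← hℓp, hc, map_smul, smul_eq_mul]
    rw [← this, mul_div_cancel_right₀ _ hℓf, hc]
  have hda : Antitone (fun n : ℕ => ‖(T ^ n) h - p‖) := by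
    refine antitone_nat_of_succ_le fun n => ?_
    have := hne ((T ^ n) h - p)
    rwa [map_sub, hTp, ← ContinuousLinearMap.mul_apply, ← pow_succ'] at this
  have hstrong : Tendsto (fun n : ℕ => (T ^ n) h) atTop (nhds p) := by
    rw [tendsto_iff_norm_sub_tendsto_zero]
    have h2 : Tendsto (fun n : ℕ => 2 * n) atTop atTop :=
      tendsto_id.const_mul_atTop' (by norm_num)
    exact (tendsto_iff_tendsto_subseq_of_antitone hda h2).2
      (tendsto_iff_norm_sub_tendsto_zero.1 hp)
  intro y
  rw [← hpe]
  exact hstrong.inner tendsto_const_nhds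
end

section
/- For every h ∈ H, the iterates converge strongly: ‖Tⁿ h − (ℓ(h)/ℓ(f))·f‖ → 0 as n → ∞. -/
open Filter
open scoped RealInnerProductSpace

/-- Under self-adjointness, nonexpansiveness, a fixed point `f`,
rigidity, and a `T`-invariant continuous linear functional `ℓ` with `ℓ f ≠ 0`,
the iterates converge strongly: `‖Tⁿ h − (ℓ h / ℓ f) • f‖ → 0`. -/
theorem iterates_converge_strongly
    {H : Type*} [NormedAddCommGroup H] [InnerProductSpace ℝ H] [CompleteSpace H]
    (T : H →L[ℝ] H)
    (hsa : ∀ x y : H, ⟪T x, y⟫ = ⟪x, T y⟫)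
    (hne : ∀ x : H, ‖T x‖ ≤ ‖x‖)
    (f : H) (hf : T f = f)
    (hrigid : ∀ x : H, ‖T x‖ = ‖x‖ → ∃ c : ℝ, x = c • f)
    (ℓ : H →L[ℝ] ℝ) (hℓ : ∀ x : H, ℓ (T x) = ℓ x) (hℓf : ℓ f ≠ 0)
    (h : H) :
    Tendsto (fun n => ‖(T ^ n) h - (ℓ h / ℓ f) • f‖) atTop (nhds 0) := by
  have hs : ∀ n x, (T ^ (n+1)) x = T ((T ^ n) x) := fun n x => by
    rw [pow_succ']; rfl
  have hsh : ∀ m n : ℕ, ∀ x y : H, ⟪(T ^ (m + n)) x, y⟫ = ⟪(T ^ n) x, (T ^ m) y⟫ := by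
    intro m
    induction m with
    | zero => intro n x y; simp
    | succ m ih =>
      intro n x y
      rw [show m + 1 + n = (m + n) + 1 by ring, hs, hsa, ih, ← ContinuousLinearMap.comp_apply]
      rw [pow_succ]; rfl
  have hanti : Antitone (fun n => ‖(T ^ n) h‖ ^ 2) := by
    apply antitone_nat_of_succ_le
    intro n
    have := hne ((T ^ n) h)
    simp only [hs]
    gcongr
  have hbdd : BddBelow (Set.range (fun n => ‖(T ^ n) h‖ ^ 2)) :=
    ⟨0, by rintro _ ⟨n, rfl⟩; positivity⟩
  have hlim := tendsto_atTop_ciInf hanti hbdd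
  have hge := fun n => ciInf_le hbdd n
  set L := ⨅ n, ‖(T ^ n) h‖ ^ 2 with hL
  have hdist : ∀ m n : ℕ, ‖(T ^ (2*m)) h - (T ^ (2*n)) h‖ ^ 2
      = ‖(T ^ (2*m)) h‖ ^ 2 + ‖(T ^ (2*n)) h‖ ^ 2 - 2 * ‖(T ^ (m+n)) h‖ ^ 2 := by
    intro m n
    have e : ⟪(T ^ (2*m)) h, (T ^ (2*n)) h⟫ = ‖(T ^ (m+n)) h‖ ^ 2 := by
      rw [← hsh, ← real_inner_self_eq_norm_sq, ← hsh]
      congr 3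
      ring
    rw [norm_sub_sq_real, e]; ring
  have hcau : CauchySeq (fun n => (T ^ (2*n)) h) := by
    rw [Metric.cauchySeq_iff]
    intro ε hε
    have hev : ∀ᶠ n in atTop, ‖(T ^ n) h‖ ^ 2 < L + ε ^ 2 / 2 :=
      hlim.eventually_lt_const (by have : 0 < ε ^ 2 := by positivity
                                   linarith)
    obtain ⟨N, hN⟩ := eventually_atTop.1 hev
    refine ⟨N, fun m hm n hn => ?_⟩
    rw [dist_eq_norm]
    refine lt_of_pow_lt_pow_left₀ 2 hε.le ?_
    rw [hdist]
    have h1 := hN (2*m) (by omega)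
    have h2 := hN (2*n) (by omega)
    have h3 := hge (m+n)
    linarith
  obtain ⟨g, hg⟩ := cauchySeq_tendsto_of_complete hcau
  have t2 : Tendsto (fun n : ℕ => 2 * n) atTop atTop :=
    tendsto_atTop_mono (fun n => by rw [id]; omega) tendsto_id
  have t3 : Tendsto (fun n : ℕ => 2 * n + 1) atTop atTop :=
    tendsto_atTop_mono (fun n => by rw [id]; omega) tendsto_id
  have hTg : Tendsto (fun n => (T ^ (2*n+1)) h) atTop (nhds (T g)) := by
    simp only [hs]
    exact (T.continuous.tendsto g).comp hg
  have e1 : ‖g‖ ^ 2 = L := tendsto_nhds_unique (hg.norm.pow 2) (hlim.comp t2)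
  have e2 : ‖T g‖ ^ 2 = L := tendsto_nhds_unique (hTg.norm.pow 2) (hlim.comp t3)
  have e3 : ‖T g‖ = ‖g‖ :=
    (pow_left_inj₀ (norm_nonneg _) (norm_nonneg _) two_ne_zero).1 (e2.trans e1.symm)
  obtain ⟨c, hc⟩ := hrigid g e3
  have hℓn : ∀ n, ℓ ((T ^ n) h) = ℓ h := by
    intro n
    induction n with
    | zero => simp
    | succ n ih => rw [hs, hℓ, ih]
  have hℓg : ℓ g = ℓ h := by
    have := (ℓ.continuous.tendsto g).comp hg
    refine tendsto_nhds_unique this ?_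
    simp only [Function.comp_def, hℓn]
    exact tendsto_const_nhds
  have hcc : (ℓ h / ℓ f) • f = g := by
    rw [← hℓg, hc]
    simp [hℓf]
  have hfix : T g = g := by rw [hc, map_smul, hf]
  rw [hcc]
  have hanti2 : Antitone (fun n => ‖(T ^ n) h - g‖) := by
    apply antitone_nat_of_succ_le
    intro n
    have := hne ((T ^ n) h - g)
    rwa [map_sub, hfix, ← hs] at this
  have hz : Tendsto (fun n => ‖(T ^ (2*n)) h - g‖) atTop (nhds 0) :=
    tendsto_iff_norm_sub_tendsto_zero.1 hg
  exact (tendsto_iff_tendsto_subseq_of_antitone hanti2 t2).2 hz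
end

section
/- Assume in addition that T is self-adjoint with respect to the weighted inner product, i.e. ∫ (T h₁)(q)·h₂(q)/f(q) dq = ∫ h₁(q)·(T h₂)(q)/f(q) dq for all measurable h₁, h₂ with finite weighted L² norms. Then for every measurable h : ℝ^m → ℝ with ∫ h²/f < ∞, the iterates of the HMC operator converge strongly to the target: ∫ (Tⁿ h(q) − α f(q))²/f(q) dq → 0 as n → ∞, where α = (∫ h dq)/(∫ f dq). -/
open MeasureTheory Filter

/-- The HMC operator: lift `h` by the auxiliary density `g`, transport by the
Hamiltonian motion `R`, and project back on the position marginal. -/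
noncomputable def hmcOp (m : ℕ)
    (g : EuclideanSpace ℝ (Fin m) → ℝ)
    (R : EuclideanSpace ℝ (Fin m) × EuclideanSpace ℝ (Fin m) →
         EuclideanSpace ℝ (Fin m) × EuclideanSpace ℝ (Fin m)) :
    (EuclideanSpace ℝ (Fin m) → ℝ) → EuclideanSpace ℝ (Fin m) → ℝ :=
  fun h q => ∫ p, h (R (q, p)).1 * g (R (q, p)).2


theorem sa_even_limit {H : Type*} [NormedAddCommGroup H] [InnerProductSpace ℝ H] [CompleteSpace H]
    (T : H →L[ℝ] H) (hT : ∀ x, ‖T x‖ ≤ ‖x‖) (hs : ∀ x y, inner ℝ (T x) y = inner ℝ x (T y))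
    (x : H) : ∃ y, T (T y) = y ∧ Tendsto (fun n => T^[2 * n] x) atTop (nhds y) := by
  have hshift : ∀ k a b, inner ℝ (T^[k] a) b = inner ℝ a (T^[k] b) := by
    intro k
    induction k with
    | zero => intro a b; rfl
    | succ k ih =>
      intro a b
      rw [Function.iterate_succ_apply', hs, ih, ← Function.iterate_succ_apply]
  have hij : ∀ i j, inner ℝ (T^[2 * i] x) (T^[2 * j] x) = ‖T^[i + j] x‖ ^ 2 := by
    intro i j
    rw [← real_inner_self_eq_norm_sq, hshift, hshift, ← Function.iterate_add_apply,
      ← Function.iterate_add_apply]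
    congr 2
    ring
  have hanti : Antitone (fun n => ‖T^[n] x‖ ^ 2) := by
    apply antitone_nat_of_succ_le
    intro n
    rw [Function.iterate_succ_apply']
    exact pow_le_pow_left₀ (norm_nonneg _) (hT _) 2
  have hlim : ∃ L, Tendsto (fun n => ‖T^[n] x‖ ^ 2) atTop (nhds L) :=
    ⟨_, tendsto_atTop_ciInf hanti ⟨0, by rintro _ ⟨n, rfl⟩; positivity⟩⟩
  obtain ⟨L, hL⟩ := hlim
  have hge : ∀ n, L ≤ ‖T^[n] x‖ ^ 2 := fun n => hanti.le_of_tendsto hL n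
  have hc : CauchySeq (fun n => T^[2 * n] x) := by
    rw [Metric.cauchySeq_iff']
    intro ε hε
    have := (hL.eventually (gt_mem_nhds (show L < L + ε ^ 2 / 4 by nlinarith)))
    obtain ⟨N, hN⟩ := this.exists
    refine ⟨N, fun n hn => ?_⟩
    rw [dist_eq_norm]
    have e : ‖T^[2 * n] x - T^[2 * N] x‖ ^ 2 =
        ‖T^[2 * n] x‖ ^ 2 - 2 * ‖T^[n + N] x‖ ^ 2 + ‖T^[2 * N] x‖ ^ 2 := by
      rw [norm_sub_sq_real, hij]
    have h1 : ‖T^[2 * n] x‖ ^ 2 ≤ ‖T^[N] x‖ ^ 2 := hanti (by omega)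
    have h2 : ‖T^[2 * N] x‖ ^ 2 ≤ ‖T^[N] x‖ ^ 2 := hanti (by omega)
    have h3 := hge (n + N)
    have : ‖T^[2 * n] x - T^[2 * N] x‖ ^ 2 < ε ^ 2 := by nlinarith
    exact lt_of_pow_lt_pow_left₀ 2 hε.le this
  obtain ⟨y, hy⟩ := cauchySeq_tendsto_of_complete hc
  refine ⟨y, ?_, hy⟩
  have h1 : Tendsto (fun n => T (T (T^[2 * n] x))) atTop (nhds (T (T y))) :=
    ((T.continuous.comp T.continuous).tendsto y).comp hy
  have h2 := hy.comp (tendsto_add_atTop_nat 1)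
  refine tendsto_nhds_unique h1 (h2.congr fun n => ?_)
  simp only [Function.comp]
  rw [← Function.iterate_succ_apply' T, ← Function.iterate_succ_apply' T]
  rfl

theorem sa_tendsto {H : Type*} [NormedAddCommGroup H] [InnerProductSpace ℝ H] [CompleteSpace H]
    (T : H →L[ℝ] H) (hT : ∀ x, ‖T x‖ ≤ ‖x‖) (hs : ∀ x y, inner ℝ (T x) y = inner ℝ x (T y))
    (e : H) (he : T e = e) (he0 : e ≠ 0)
    (hfix : ∀ y, ‖T y‖ = ‖y‖ → ∃ c : ℝ, y = c • e) (x : H) :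
    Tendsto (fun n => ‖T^[n] x - (inner ℝ e x / inner ℝ e e) • e‖ ^ 2) atTop (nhds 0) := by
  obtain ⟨y, hy, hlim⟩ := sa_even_limit T hT hs x
  obtain ⟨c, rfl⟩ := hfix y (le_antisymm (hT y) (by
    conv_lhs => rw [← hy]
    exact hT _))
  have hin : ∀ n, inner ℝ e (T^[n] x) = inner ℝ e x := by
    intro n
    induction n with
    | zero => rfl
    | succ n ih => rw [Function.iterate_succ_apply', ← hs, he, ih]
  have hee : inner ℝ e e ≠ 0 := by simpa using he0
  have hc : inner ℝ e x = c * inner ℝ e e := by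
    have h1 : Tendsto (fun n => inner ℝ e (T^[2 * n] x)) atTop (nhds (inner ℝ e (c • e))) :=
      tendsto_const_nhds.inner hlim
    simp only [hin] at h1
    rw [tendsto_nhds_unique tendsto_const_nhds h1, real_inner_smul_right]
  have hc' : inner ℝ e x / inner ℝ e e = c := by rw [hc]; field_simp
  rw [hc']
  have hTc : T (c • e) = c • e := by rw [map_smul, he]
  have hanti : Antitone (fun n => ‖T^[n] x - c • e‖ ^ 2) := by
    apply antitone_nat_of_succ_le
    intro n
    rw [Function.iterate_succ_apply']
    refine pow_le_pow_left₀ (norm_nonneg _) ?_ 2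
    conv_lhs => rw [← hTc, ← map_sub]
    exact hT _
  have h2 : Tendsto (fun n => ‖T^[2 * n] x - c • e‖ ^ 2) atTop (nhds 0) := by
    have := ((hlim.sub_const (c • e)).norm).pow 2
    simpa using this
  have hL := tendsto_atTop_ciInf hanti ⟨0, by rintro _ ⟨n, rfl⟩; positivity⟩
  have h3 := hL.comp (tendsto_id.const_mul_atTop' (show 0 < 2 by norm_num))
  have := tendsto_nhds_unique h3 h2
  rwa [this] at hL

section avg
variable {X Y : Type*} [MeasurableSpace X] [MeasurableSpace Y]

/-- composition with the first projection -/
noncomputable def liftFst (π : Measure X) (γ : Measure Y) [IsFiniteMeasure π]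
    [IsProbabilityMeasure γ] : Lp ℝ 2 π →L[ℝ] Lp ℝ 2 (π.prod γ) :=
  (Lp.compMeasurePreservingₗᵢ ℝ (Prod.fst : X × Y → X)
    (measurePreserving_fst (μ := π) (ν := γ))).toContinuousLinearMap

/-- composition with a measure preserving map -/
noncomputable def liftMap (π : Measure X) (γ : Measure Y) [IsFiniteMeasure π]
    [IsProbabilityMeasure γ] (S : X × Y → X) (hS : MeasurePreserving S (π.prod γ) π) :
    Lp ℝ 2 π →L[ℝ] Lp ℝ 2 (π.prod γ) :=
  (Lp.compMeasurePreservingₗᵢ ℝ S hS).toContinuousLinearMap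

variable (π : Measure X) (γ : Measure Y) [IsFiniteMeasure π] [IsProbabilityMeasure γ]
  (S : X × Y → X) (hS : MeasurePreserving S (π.prod γ) π)

theorem liftFst_coe (φ : Lp ℝ 2 π) :
    ∀ᵐ z ∂(π.prod γ), liftFst π γ φ z = φ z.1 :=
  Lp.coeFn_compMeasurePreserving φ measurePreserving_fst

theorem liftMap_coe (φ : Lp ℝ 2 π) :
    ∀ᵐ z ∂(π.prod γ), liftMap π γ S hS φ z = φ (S z) :=
  Lp.coeFn_compMeasurePreserving φ hS

theorem liftFst_norm (φ : Lp ℝ 2 π) : ‖liftFst π γ φ‖ = ‖φ‖ :=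
  Lp.norm_compMeasurePreserving φ measurePreserving_fst

theorem liftMap_norm (φ : Lp ℝ 2 π) : ‖liftMap π γ S hS φ‖ = ‖φ‖ :=
  Lp.norm_compMeasurePreserving φ hS

/-- the Markov operator -/
noncomputable def avgOp : Lp ℝ 2 π →L[ℝ] Lp ℝ 2 π :=
  (ContinuousLinearMap.adjoint (liftFst π γ)) ∘L liftMap π γ S hS

theorem adj_norm_le (u : Lp ℝ 2 (π.prod γ)) :
    ‖ContinuousLinearMap.adjoint (liftFst π γ) u‖ ≤ ‖u‖ := by
  set v := ContinuousLinearMap.adjoint (liftFst π γ) u with hv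
  have h1 : ‖v‖ ^ 2 ≤ ‖u‖ * ‖v‖ := by
    rw [← real_inner_self_eq_norm_sq]
    conv_lhs => rw [hv, ContinuousLinearMap.adjoint_inner_left, ← hv]
    refine (real_inner_le_norm _ _).trans ?_
    rw [liftFst_norm]
  by_contra hc
  push Not at hc
  nlinarith [norm_nonneg u, norm_nonneg v]

theorem avgOp_norm_le (φ : Lp ℝ 2 π) : ‖avgOp π γ S hS φ‖ ≤ ‖φ‖ :=
  (adj_norm_le π γ _).trans (liftMap_norm π γ S hS φ).le

theorem adj_coe (u : Lp ℝ 2 (π.prod γ)) :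
    ∀ᵐ q ∂π, ContinuousLinearMap.adjoint (liftFst π γ) u q = ∫ p, u (q, p) ∂γ := by
  have hu : Integrable u (π.prod γ) := (Lp.memLp u).integrable (by norm_num)
  have hv : Integrable (ContinuousLinearMap.adjoint (liftFst π γ) u) π :=
    (Lp.memLp _).integrable (by norm_num)
  refine Integrable.ae_eq_of_forall_setIntegral_eq _ _ hv hu.integral_prod_left ?_
  intro s hs hlt
  have e1 := L2.inner_indicatorConstLp_one (𝕜 := ℝ) hs hlt.ne
    (ContinuousLinearMap.adjoint (liftFst π γ) u)
  rw [← e1, ContinuousLinearMap.adjoint_inner_right, L2.inner_def]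
  have e2 : ∫ z, inner ℝ (liftFst π γ (indicatorConstLp 2 hs hlt.ne (1 : ℝ)) z) (u z) ∂(π.prod γ)
      = ∫ z in s ×ˢ Set.univ, u z ∂(π.prod γ) := by
    rw [← integral_indicator (hs.prod MeasurableSet.univ)]
    refine integral_congr_ae ?_
    have h1 := liftFst_coe π γ (indicatorConstLp 2 hs hlt.ne (1 : ℝ))
    have h2 := (measurePreserving_fst (μ := π) (ν := γ)).quasiMeasurePreserving.ae
      (indicatorConstLp_coeFn (p := 2) (hs := hs) (hμs := hlt.ne) (c := (1 : ℝ)))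
    filter_upwards [h1, h2] with z hz1 hz2
    rw [hz1, hz2]
    by_cases hz : z.1 ∈ s <;> simp [Set.indicator, hz]
  rw [e2, setIntegral_prod _ hu.integrableOn]
  simp

theorem avgOp_coe (φ : Lp ℝ 2 π) :
    ∀ᵐ q ∂π, avgOp π γ S hS φ q = ∫ p, φ (S (q, p)) ∂γ := by
  filter_upwards [adj_coe π γ (liftMap π γ S hS φ),
    Measure.ae_ae_of_ae_prod (liftMap_coe π γ S hS φ)] with q h1 h2
  exact h1.trans (integral_congr_ae h2)

theorem avgOp_one : avgOp π γ S hS (Lp.const 2 π (1 : ℝ)) = Lp.const 2 π (1 : ℝ) := by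
  apply Lp.ext
  have h0 : ∀ᵐ q ∂π, (Lp.const 2 π (1 : ℝ)) q = 1 := Lp.coeFn_const ..
  filter_upwards [avgOp_coe π γ S hS (Lp.const 2 π (1 : ℝ)),
    Measure.ae_ae_of_ae_prod (hS.quasiMeasurePreserving.ae h0), h0] with q h1 h2 h3
  rw [h1, integral_congr_ae h2, h3]
  simp

theorem avgOp_eq_norm (φ : Lp ℝ 2 π) (h : ‖avgOp π γ S hS φ‖ = ‖φ‖) :
    ∀ᵐ q ∂π, ∀ᵐ p ∂γ, φ (S (q, p)) = avgOp π γ S hS φ q := by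
  have key : liftFst π γ (avgOp π γ S hS φ) = liftMap π γ S hS φ := by
    rw [← sub_eq_zero, ← norm_eq_zero, ← sq_eq_zero_iff, norm_sub_sq_real,
      ← ContinuousLinearMap.adjoint_inner_right]
    change _ - 2 * inner ℝ _ (avgOp π γ S hS φ) + _ = 0
    rw [real_inner_self_eq_norm_sq, liftFst_norm, liftMap_norm, h]
    ring
  have h1 := liftFst_coe π γ (avgOp π γ S hS φ)
  rw [key] at h1
  refine Measure.ae_ae_of_ae_prod (p := fun z => φ (S z) = avgOp π γ S hS φ z.1) ?_
  filter_upwards [h1, liftMap_coe π γ S hS φ] with z hz1 hz2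
  rw [← hz1, hz2]

end avg

theorem withDensity_prod_mp {X : Type*} [MeasurableSpace X] (μ : Measure X) [SigmaFinite μ]
    (f g : X → ℝ) (hf : Measurable f) (hg : Measurable g) (hg0 : ∀ p, 0 ≤ g p)
    [SFinite (μ.withDensity fun q => ENNReal.ofReal (g q))]
    (R : X × X → X × X) (hR : MeasurePreserving R (μ.prod μ) (μ.prod μ))
    (hinv : ∀ q p, f (R (q, p)).1 * g (R (q, p)).2 = f q * g p) :
    MeasurePreserving R
      ((μ.withDensity fun q => ENNReal.ofReal (f q)).prod
        (μ.withDensity fun q => ENNReal.ofReal (g q)))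
      ((μ.withDensity fun q => ENNReal.ofReal (f q)).prod
        (μ.withDensity fun q => ENNReal.ofReal (g q))) := by
  rw [prod_withDensity (by fun_prop) (by fun_prop)]
  refine ⟨hR.measurable, ?_⟩
  ext s hs
  rw [Measure.map_apply hR.measurable hs, withDensity_apply _ (hR.measurable hs),
    withDensity_apply _ hs, ← hR.setLIntegral_comp_preimage hs (by fun_prop)]
  refine lintegral_congr fun z => ?_
  rw [← ENNReal.ofReal_mul' (hg0 _), ← ENNReal.ofReal_mul' (hg0 _), hinv z.1 z.2]

/-- If the HMC operator is in addition self-adjoint for the weighted inner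
product `⟨h₁,h₂⟩ = ∫ h₁ h₂ / f`, then its iterates converge strongly in weighted `L²` to
`α f` with `α = (∫ h) / (∫ f)`. -/
theorem hmc_iterates_converge_strongly
    (m : ℕ) (hm : 1 ≤ m)
    (f g : EuclideanSpace ℝ (Fin m) → ℝ)
    (hf_meas : Measurable f)
    (hf_pos : ∀ᵐ q : EuclideanSpace ℝ (Fin m), 0 < f q)
    (hf_int : Integrable f)
    (hf_int_pos : 0 < ∫ q, f q)
    (hg_meas : Measurable g)
    (hg_nonneg : ∀ p, 0 ≤ g p)
    (hg_int : (∫ p, g p) = 1)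
    (R : EuclideanSpace ℝ (Fin m) × EuclideanSpace ℝ (Fin m) →
         EuclideanSpace ℝ (Fin m) × EuclideanSpace ℝ (Fin m))
    (hR_bij : Function.Bijective R)
    (hR_mp : MeasurePreserving R volume volume)
    (hinv : ∀ q p : EuclideanSpace ℝ (Fin m),
      f (R (q, p)).1 * g (R (q, p)).2 = f q * g p)
    -- Coverage property:
    (hcov : ∀ᵐ q : EuclideanSpace ℝ (Fin m),
      (Measure.map (fun p => (R (q, p)).1)
          (volume.withDensity fun p => ENNReal.ofReal (g p))) ≪ volume ∧
      volume ≪ (Measure.map (fun p => (R (q, p)).1)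
          (volume.withDensity fun p => ENNReal.ofReal (g p))))
    -- Self-adjointness with respect to the weighted inner product:
    (hselfadj : ∀ h₁ h₂ : EuclideanSpace ℝ (Fin m) → ℝ,
      Measurable h₁ → Measurable h₂ →
      Integrable (fun q => h₁ q ^ 2 / f q) → Integrable (fun q => h₂ q ^ 2 / f q) →
      (∫ q, hmcOp m g R h₁ q * h₂ q / f q) = ∫ q, h₁ q * hmcOp m g R h₂ q / f q)
    (h : EuclideanSpace ℝ (Fin m) → ℝ) (hh_meas : Measurable h)
    (hh_L2 : Integrable (fun q => h q ^ 2 / f q)) :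
    Tendsto
      (fun n => ∫ q,
        ((hmcOp m g R)^[n] h q - ((∫ x, h x) / (∫ x, f x)) * f q) ^ 2 / f q)
      atTop (nhds 0) := by
  set π : Measure (EuclideanSpace ℝ (Fin m)) :=
    volume.withDensity fun q => ENNReal.ofReal (f q) with hπ
  set γ : Measure (EuclideanSpace ℝ (Fin m)) :=
    volume.withDensity fun q => ENNReal.ofReal (g q) with hγ
  have hg_i : Integrable g := by
    by_contra hc
    rw [integral_undef hc] at hg_int
    norm_num at hg_int
  have hπfin : IsFiniteMeasure π := isFiniteMeasure_withDensity_ofReal hf_int.2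
  have hγprob : IsProbabilityMeasure γ := by
    refine ⟨?_⟩
    rw [hγ, withDensity_apply _ MeasurableSet.univ, Measure.restrict_univ,
      ← ofReal_integral_eq_lintegral_ofReal hg_i (ae_of_all _ hg_nonneg), hg_int,
      ENNReal.ofReal_one]
  have hRm : Measurable R := hR_mp.measurable
  have hRπ : MeasurePreserving R (π.prod γ) (π.prod γ) :=
    withDensity_prod_mp volume f g hf_meas hg_meas hg_nonneg R hR_mp hinv
  have hS : MeasurePreserving (fun z => (R z).1) (π.prod γ) π :=
    measurePreserving_fst.comp hRπ
  have hπv : π ≪ volume := withDensity_absolutelyContinuous _ _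
  have hvπ : (volume : Measure (EuclideanSpace ℝ (Fin m))) ≪ π := by
    refine withDensity_absolutelyContinuous' (by fun_prop) ?_
    filter_upwards [hf_pos] with q hq
    simpa using hq
  -- integrals against π and γ
  have hIπ : ∀ u : EuclideanSpace ℝ (Fin m) → ℝ, ∫ q, u q ∂π = ∫ q, f q * u q := by
    intro u
    rw [hπ, integral_withDensity_eq_integral_toReal_smul (by fun_prop)
      (ae_of_all _ fun _ => ENNReal.ofReal_lt_top)]
    refine integral_congr_ae ?_
    filter_upwards [hf_pos] with q hq
    rw [ENNReal.toReal_ofReal hq.le, smul_eq_mul]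
  have hIγ : ∀ u : EuclideanSpace ℝ (Fin m) → ℝ, ∫ q, u q ∂γ = ∫ q, g q * u q := by
    intro u
    rw [hγ, integral_withDensity_eq_integral_toReal_smul (by fun_prop)
      (ae_of_all _ fun _ => ENNReal.ofReal_lt_top)]
    refine integral_congr_ae (ae_of_all _ fun q => ?_)
    simp only [ENNReal.toReal_ofReal (hg_nonneg q), smul_eq_mul]
  have hintπ : ∀ u : EuclideanSpace ℝ (Fin m) → ℝ,
      Integrable u π ↔ Integrable fun q => f q * u q := by
    intro u
    rw [hπ, integrable_withDensity_iff (by fun_prop)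
      (ae_of_all _ fun _ => ENNReal.ofReal_lt_top)]
    refine integrable_congr ?_
    filter_upwards [hf_pos] with q hq
    rw [ENNReal.toReal_ofReal hq.le, mul_comm]
  set P := avgOp π γ (fun z => (R z).1) hS with hP
  -- the link between the operators
  have hlink : ∀ (k : EuclideanSpace ℝ (Fin m) → ℝ) (φ : Lp ℝ 2 π),
      (∀ᵐ q, k q = f q * φ q) → ∀ᵐ q, hmcOp m g R k q = f q * P φ q := by
    intro k φ hk
    have h1 : ∀ᵐ z : EuclideanSpace ℝ (Fin m) × EuclideanSpace ℝ (Fin m),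
        k (R z).1 = f (R z).1 * φ (R z).1 :=
      (Measure.quasiMeasurePreserving_fst.comp hR_mp.quasiMeasurePreserving).ae hk
    filter_upwards [hvπ.ae_le (avgOp_coe π γ (fun z => (R z).1) hS φ),
      Measure.ae_ae_of_ae_prod h1] with q hq1 hq2
    rw [hq1, hIγ, ← integral_const_mul]
    refine integral_congr_ae ?_
    filter_upwards [hq2] with p hp
    rw [hp, ← mul_assoc, ← hinv q p]
    ring
  have hinner : ∀ φ ψ : Lp ℝ 2 π, inner ℝ φ ψ = ∫ q, f q * (φ q * ψ q) := by
    intro φ ψ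
    rw [L2.inner_def, ← hIπ]
    simp [mul_comm]
  have hsq : ∀ φ : Lp ℝ 2 π, Integrable fun q => (f q * φ q) ^ 2 / f q := by
    intro φ
    refine ((hintπ _).1 (Lp.memLp φ).integrable_sq).congr ?_
    filter_upwards [hf_pos] with q hq
    field_simp
  have hs : ∀ φ ψ : Lp ℝ 2 π, inner ℝ (P φ) ψ = inner ℝ φ (P ψ) := by
    intro φ ψ
    have h1 := hselfadj (fun q => f q * φ q) (fun q => f q * ψ q)
      (hf_meas.mul (Lp.stronglyMeasurable φ).measurable)
      (hf_meas.mul (Lp.stronglyMeasurable ψ).measurable) (hsq φ) (hsq ψ)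
    rw [hinner, hinner]
    convert h1 using 1
    · refine integral_congr_ae ?_
      filter_upwards [hf_pos, hlink _ φ (ae_of_all _ fun _ => rfl)] with q hq h2
      rw [h2]
      field_simp
    · refine integral_congr_ae ?_
      filter_upwards [hf_pos, hlink _ ψ (ae_of_all _ fun _ => rfl)] with q hq h2
      rw [h2]
      field_simp
  set e : Lp ℝ 2 π := Lp.const 2 π (1 : ℝ) with he
  have hecoe : ∀ᵐ q, e q = 1 := hvπ.ae_le (Lp.coeFn_const ..)
  have hee : inner ℝ e e = ∫ q, f q := by
    rw [hinner]
    refine integral_congr_ae ?_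
    filter_upwards [hecoe] with q hq
    simp [hq]
  have he0 : e ≠ 0 := by
    intro h0
    rw [h0, inner_zero_left] at hee
    exact hf_int_pos.ne hee
  have hfix : ∀ y, ‖P y‖ = ‖y‖ → ∃ c : ℝ, y = c • e := by
    intro y hy
    have h1 := hvπ.ae_le (avgOp_eq_norm π γ (fun z => (R z).1) hS y hy)
    have : NeZero (volume : Measure (EuclideanSpace ℝ (Fin m))) := inferInstance
    obtain ⟨q, hq1, hq2⟩ := (Filter.Eventually.and h1 hcov).exists
    refine ⟨P y q, ?_⟩
    have hm1 : Measurable fun p => (R (q, p)).1 := by fun_prop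
    have h2 : ∀ᵐ x ∂(Measure.map (fun p => (R (q, p)).1) γ), y x = P y q := by
      rw [ae_map_iff hm1.aemeasurable]
      · exact hq1
      · exact (Lp.stronglyMeasurable y).measurable (measurableSet_singleton _)
    have h3 := hq2.2.ae_le h2
    apply Lp.ext
    apply hπv.ae_le
    filter_upwards [h3, hecoe, hvπ.ae_le (Lp.coeFn_smul (P y q) e)] with x h4 h5 h6
    rw [h6, h4]
    simp [h5]
  -- the initial vector
  have hmem : MemLp (fun q => h q / f q) 2 π := by
    rw [memLp_two_iff_integrable_sq (by exact (hh_meas.div hf_meas).aestronglyMeasurable), hintπ]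
    refine hh_L2.congr ?_
    filter_upwards [hf_pos] with q hq
    field_simp
  set φ : Lp ℝ 2 π := hmem.toLp with hφ
  have hφc : ∀ᵐ q, h q = f q * φ q := by
    filter_upwards [hf_pos, hvπ.ae_le hmem.coeFn_toLp] with q hq h1
    rw [hφ, h1]
    field_simp
  have hiter : ∀ n, ∀ᵐ q, (hmcOp m g R)^[n] h q = f q * (P^[n] φ) q := by
    intro n
    induction n with
    | zero => exact hφc
    | succ n ih =>
      rw [Function.iterate_succ_apply', Function.iterate_succ_apply']
      exact hlink _ _ ih
  have hex : inner ℝ e φ = ∫ q, h q := by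
    rw [hinner]
    refine integral_congr_ae ?_
    filter_upwards [hecoe, hφc] with q h1 h2
    rw [h1, h2, one_mul]
  have main := sa_tendsto P (avgOp_norm_le π γ _ hS) hs e (avgOp_one π γ _ hS) he0 hfix φ
  rw [hex, hee] at main
  refine main.congr fun n => ?_
  rw [← real_inner_self_eq_norm_sq, hinner]
  refine integral_congr_ae ?_
  filter_upwards [hf_pos, hiter n, hecoe,
    hvπ.ae_le (Lp.coeFn_sub (P^[n] φ) (((∫ x, h x) / (∫ x, f x)) • e)),
    hvπ.ae_le (Lp.coeFn_smul ((∫ x, h x) / (∫ x, f x)) e)] with q hq h1 h2 h3 h4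
  rw [h3, h1, Pi.sub_apply, h4, Pi.smul_apply, h2, smul_eq_mul]
  field_simp
end

section
/- Suppose β ∈ (0,1), Q is jointly measurable (so κ(q) := μ(q) defines a Markov kernel on ℝ^m), and for every p ∈ ℝ^m the map q ↦ Q(q,p) is differentiable with the operator norm of its derivative at most β at every point. Then for every n ≥ 1 and all q₁, q₂ ∈ ℝ^m, writing κⁿ(q) for the n-step transition law (the n-fold composition of the kernel κ) started from q, there exists a coupling γ of κⁿ(q₁) and κⁿ(q₂) with ∫ ‖x − y‖ dγ ≤ βⁿ·‖q₁ − q₂‖; in particular W₁(κⁿ(q₁), κⁿ(q₂)) ≤ βⁿ·‖q₁ − q₂‖, i.e., the Markov recursion converges geometrically in the W₁ metric with rate at least 1 − β. -/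
open MeasureTheory ProbabilityTheory

/-- The Wasserstein-1 distance: infimum of `∫ ‖x − y‖ dγ` over couplings `γ` of `μ` and `ν`. -/
noncomputable def wassersteinW1 {E : Type*} [NormedAddCommGroup E] [MeasurableSpace E]
    (μ ν : Measure E) : ℝ :=
  sInf ((fun γ : Measure (E × E) => ∫ z, ‖z.1 - z.2‖ ∂γ) ''
    {γ : Measure (E × E) | γ.map Prod.fst = μ ∧ γ.map Prod.snd = ν})

/-- The `n`-fold composition of a Markov kernel with itself. -/
noncomputable def kernelIter {E : Type*} [MeasurableSpace E] (κ : Kernel E E) :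
    ℕ → Kernel E E
  | 0 => Kernel.id
  | n + 1 => κ ∘ₖ kernelIter κ n

lemma map_prod_eq_bind {E : Type*} [MeasurableSpace E] (Q : E × E → E) (hQ : Measurable Q)
    (G : Measure E) [IsProbabilityMeasure G] (κ : Kernel E E)
    (hκ : ∀ q, κ q = G.map (fun p => Q (q, p))) (μ : Measure E) [IsProbabilityMeasure μ] :
    (μ.prod G).map Q = μ.bind κ := by
  ext s hs
  rw [Measure.map_apply hQ hs, Measure.prod_apply (hQ hs),
    Measure.bind_apply hs κ.measurable.aemeasurable]
  refine lintegral_congr fun q => ?_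
  have hq : Measurable (fun p => Q (q, p)) := hQ.comp measurable_prodMk_left
  rw [hκ, Measure.map_apply hq hs]
  rfl

lemma exists_coupling {E : Type*} [NormedAddCommGroup E] [MeasurableSpace E]
    [BorelSpace E] [SecondCountableTopology E]
    (β : ℝ) (hβ0 : 0 < β) (Q : E × E → E) (hQ : Measurable Q)
    (G : Measure E) [IsProbabilityMeasure G] (κ : Kernel E E)
    (hκ : ∀ q, κ q = G.map (fun p => Q (q, p)))
    (hL : ∀ p x y, ‖Q (x, p) - Q (y, p)‖ ≤ β * ‖x - y‖) (n : ℕ) (q₁ q₂ : E) :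
    ∃ γ : Measure (E × E), IsProbabilityMeasure γ ∧
      γ.map Prod.fst = kernelIter κ n q₁ ∧ γ.map Prod.snd = kernelIter κ n q₂ ∧
      ∀ᵐ z ∂γ, ‖z.1 - z.2‖ ≤ β ^ n * ‖q₁ - q₂‖ := by
  induction n with
  | zero =>
    refine ⟨Measure.dirac (q₁, q₂), inferInstance, ?_, ?_, ?_⟩
    · rw [Measure.map_dirac' measurable_fst]; simp [kernelIter, Kernel.id_apply]
    · rw [Measure.map_dirac' measurable_snd]; simp [kernelIter, Kernel.id_apply]
    · rw [ae_dirac_iff (measurableSet_le (by fun_prop) (by fun_prop))]; simp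
  | succ n ih =>
    obtain ⟨γ, hγ, h1, h2, h3⟩ := ih
    have m1 : Measurable (fun w : (E × E) × E => Q (w.1.1, w.2)) := hQ.comp (by fun_prop)
    have m2 : Measurable (fun w : (E × E) × E => Q (w.1.2, w.2)) := hQ.comp (by fun_prop)
    have m12 := m1.prodMk m2
    have key : ∀ f : E × E → E, Measurable f →
        (γ.prod G).map (fun w => Q (f w.1, w.2)) = (γ.map f).bind κ := by
      intro f hf
      have : IsProbabilityMeasure (γ.map f) := Measure.isProbabilityMeasure_map hf.aemeasurable
      rw [← map_prod_eq_bind Q hQ G κ hκ]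
      have h := Measure.map_prod_map γ G hf measurable_id
      rw [Measure.map_id] at h
      rw [h, Measure.map_map hQ (hf.prodMap measurable_id)]
      rfl
    refine ⟨(γ.prod G).map (fun w => (Q (w.1.1, w.2), Q (w.1.2, w.2))),
      Measure.isProbabilityMeasure_map m12.aemeasurable, ?_, ?_, ?_⟩
    · rw [Measure.map_map measurable_fst m12, kernelIter, Kernel.comp_apply, ← h1]
      exact key _ measurable_fst
    · rw [Measure.map_map measurable_snd m12, kernelIter, Kernel.comp_apply, ← h2]
      exact key _ measurable_snd
    · rw [ae_map_iff m12.aemeasurable (measurableSet_le (by fun_prop) (by fun_prop))]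
      have h4 : ∀ᵐ w ∂(γ.prod G), ‖w.1.1 - w.1.2‖ ≤ β ^ n * ‖q₁ - q₂‖ :=
        Measure.quasiMeasurePreserving_fst.ae h3
      filter_upwards [h4] with w hw
      calc _ ≤ β * ‖w.1.1 - w.1.2‖ := hL _ _ _
        _ ≤ β * (β ^ n * ‖q₁ - q₂‖) := by gcongr
        _ = _ := by ring

/-- If `q ↦ Q(q,p)` is differentiable with derivative of operator norm at
most `β < 1` everywhere, then the `n`-step HMC transition laws contract at geometric rate:
there is a coupling of `κⁿ(q₁)` and `κⁿ(q₂)` with transport cost at most `βⁿ ‖q₁ − q₂‖`,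
so `W₁(κⁿ(q₁), κⁿ(q₂)) ≤ βⁿ ‖q₁ − q₂‖`. -/
theorem hmc_n_step_geometric_contraction
    (m : ℕ) (hm : 1 ≤ m) (β : ℝ) (hβ0 : 0 < β) (hβ1 : β < 1)
    (Q : EuclideanSpace ℝ (Fin m) × EuclideanSpace ℝ (Fin m) → EuclideanSpace ℝ (Fin m))
    (hQ : Measurable Q)
    (G : Measure (EuclideanSpace ℝ (Fin m))) [IsProbabilityMeasure G]
    (hdiff : ∀ p q : EuclideanSpace ℝ (Fin m),
      DifferentiableAt ℝ (fun q' => Q (q', p)) q)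
    (hder : ∀ p q : EuclideanSpace ℝ (Fin m),
      ‖fderiv ℝ (fun q' => Q (q', p)) q‖ ≤ β)
    (κ : Kernel (EuclideanSpace ℝ (Fin m)) (EuclideanSpace ℝ (Fin m)))
    [IsMarkovKernel κ]
    (hκ : ∀ q : EuclideanSpace ℝ (Fin m), κ q = G.map (fun p => Q (q, p)))
    (n : ℕ) (hn : 1 ≤ n)
    (q₁ q₂ : EuclideanSpace ℝ (Fin m)) :
    (∃ γ : Measure (EuclideanSpace ℝ (Fin m) × EuclideanSpace ℝ (Fin m)),
      γ.map Prod.fst = kernelIter κ n q₁ ∧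
      γ.map Prod.snd = kernelIter κ n q₂ ∧
      (∫ z, ‖z.1 - z.2‖ ∂γ) ≤ β ^ n * ‖q₁ - q₂‖) ∧
    wassersteinW1 (kernelIter κ n q₁) (kernelIter κ n q₂) ≤ β ^ n * ‖q₁ - q₂‖ := by
  have hL : ∀ p x y, ‖Q (x, p) - Q (y, p)‖ ≤ β * ‖x - y‖ := fun p x y =>
    Convex.norm_image_sub_le_of_norm_fderiv_le (𝕜 := ℝ) (f := fun q' => Q (q', p)) (s := Set.univ)
      (fun q _ => hdiff p q) (fun q _ => hder p q) convex_univ (Set.mem_univ y) (Set.mem_univ x)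
  obtain ⟨γ, hγ, h1, h2, h3⟩ := exists_coupling β hβ0 Q hQ G κ hκ hL n q₁ q₂
  have hle : (∫ z, ‖z.1 - z.2‖ ∂γ) ≤ β ^ n * ‖q₁ - q₂‖ := by
    have h := integral_mono_of_nonneg (μ := γ) (f := fun z => ‖z.1 - z.2‖)
      (Filter.Eventually.of_forall fun z => norm_nonneg _)
      (integrable_const (β ^ n * ‖q₁ - q₂‖)) h3
    simpa using h
  refine ⟨⟨γ, h1, h2, hle⟩, le_trans (csInf_le ⟨0, ?_⟩ ⟨γ, ⟨h1, h2⟩, rfl⟩) hle⟩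
  rintro _ ⟨γ', -, rfl⟩
  exact integral_nonneg fun z => norm_nonneg _
end

section
/- Let g : ℝ^m → ℝ be continuous with g(y) > 0 for all y and ∫ g = 1, and consider the Markov transition kernel on ℝ^m with translation density: P(x, A) = ∫_A g(y − x) dy for Borel sets A. Then every compact set C ⊂ ℝ^m is a small set for this kernel: there exist ε > 0 and a probability measure ν on ℝ^m such that P(x, A) ≥ ε·ν(A) for every x ∈ C and every Borel set A ⊂ ℝ^m. -/
open MeasureTheory

/-- For the Markov kernel with translation density
`P(x, A) = ∫_A g(y − x) dy`, where `g` is continuous, everywhere positive and integrates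
to `1`, every compact set `C ⊆ ℝ^m` is small: there are `ε > 0` and a probability
measure `ν` with `P(x, A) ≥ ε ν(A)` for all `x ∈ C` and all Borel sets `A`. -/
theorem compact_sets_are_small_for_translation_kernel
    (m : ℕ) (hm : 1 ≤ m)
    (g : EuclideanSpace ℝ (Fin m) → ℝ)
    (hg_cont : Continuous g)
    (hg_pos : ∀ y, 0 < g y)
    (hg_int : (∫ y, g y) = 1)
    (C : Set (EuclideanSpace ℝ (Fin m))) (hC : IsCompact C) :
    ∃ ε : ℝ, 0 < ε ∧
      ∃ ν : Measure (EuclideanSpace ℝ (Fin m)), IsProbabilityMeasure ν ∧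
        ∀ x ∈ C, ∀ A : Set (EuclideanSpace ℝ (Fin m)), MeasurableSet A →
          ENNReal.ofReal ε * ν A ≤ ∫⁻ y in A, ENNReal.ofReal (g (y - x)) := by
  set B : Set (EuclideanSpace ℝ (Fin m)) := Metric.closedBall 0 1 with hB
  have hBc : IsCompact B := isCompact_closedBall 0 1
  have hB0 : volume B ≠ 0 := (Metric.measure_closedBall_pos volume 0 one_pos).ne'
  have hBt : volume B ≠ ⊤ := hBc.measure_lt_top.ne
  obtain ⟨δ, hδ, hle⟩ := (hBc.prod hC).exists_forall_le'
    (f := fun p : EuclideanSpace ℝ (Fin m) × EuclideanSpace ℝ (Fin m) => g (p.1 - p.2))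
    (hg_cont.comp (continuous_fst.sub continuous_snd)).continuousOn
    (a := 0) (fun p _ => hg_pos _)
  refine ⟨δ * (volume B).toReal, mul_pos hδ (ENNReal.toReal_pos hB0 hBt),
    ProbabilityTheory.cond volume B,
    ProbabilityTheory.cond_isProbabilityMeasure_of_finite hB0 hBt, ?_⟩
  intro x hx A hA
  rw [ProbabilityTheory.cond_apply hBc.measurableSet, ENNReal.ofReal_mul hδ.le,
    ENNReal.ofReal_toReal hBt, mul_assoc, ← mul_assoc (volume B),
    ENNReal.mul_inv_cancel hB0 hBt, one_mul]
  calc ENNReal.ofReal δ * volume (B ∩ A) = ∫⁻ _ in B ∩ A, ENNReal.ofReal δ := by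
        rw [setLIntegral_const]
    _ ≤ ∫⁻ y in B ∩ A, ENNReal.ofReal (g (y - x)) :=
        setLIntegral_mono' (hBc.measurableSet.inter hA)
          (fun y hy => ENNReal.ofReal_le_ofReal (hle (y, x) ⟨hy.1, hx⟩))
    _ ≤ ∫⁻ y in A, ENNReal.ofReal (g (y - x)) :=
        lintegral_mono_set Set.inter_subset_right
end

section
/- Suppose β ∈ (0,1), R > 0, p ∈ ℝ^m, and the map q ↦ Q(q,p) is differentiable on ℝ^m, with the operator norm of its derivative at most β at every q with ‖q‖ > R and at most 1 at every q ∈ ℝ^m. Then for all q₁, q₂ ∈ ℝ^m with ‖q₁‖ > 2R and ‖q₂‖ > 2R, one has ‖Q(q₁,p) − Q(q₂,p)‖ ≤ ((1+β)/2)·‖q₁ − q₂‖. -/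
theorem ray_bound_aux {E : Type*} [NormedAddCommGroup E] [NormedSpace ℝ E] (f : E → E)
    (hf : ∀ q, DifferentiableAt ℝ f q) (u w : E) (T C : ℝ) (hT : 0 ≤ T)
    (hC : ∀ t : ℝ, 0 ≤ t → t < T → ‖fderiv ℝ f (u + t • w)‖ ≤ C) :
    ‖f (u + T • w) - f u‖ ≤ C * ‖w‖ * T := by
  have hd : ∀ t : ℝ, HasDerivAt (fun t : ℝ => f (u + t • w)) (fderiv ℝ f (u + t • w) w) t := by
    intro t
    have h1 : HasDerivAt (fun t : ℝ => u + t • w) w t := by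
      simpa using ((hasDerivAt_id t).smul_const w).const_add u
    exact (hf (u + t • w)).hasFDerivAt.comp_hasDerivAt t h1
  have h := norm_image_sub_le_of_norm_deriv_le_segment' (a := 0) (b := T) (C := C * ‖w‖)
    (fun t _ => (hd t).hasDerivWithinAt)
    (fun t ht => (ContinuousLinearMap.le_opNorm _ _).trans
      (mul_le_mul_of_nonneg_right (hC t ht.1 ht.2) (norm_nonneg _))) T ⟨hT, le_refl T⟩
  simpa using h

/-- If `q ↦ Q(q,p)` is differentiable with derivative of operator norm at
most `β` at every `q` with `‖q‖ > R` and at most `1` everywhere, then for `q₁, q₂` with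
`‖q₁‖ > 2R` and `‖q₂‖ > 2R` one has `‖Q(q₁,p) − Q(q₂,p)‖ ≤ ((1+β)/2) ‖q₁ − q₂‖`. -/
theorem pointwise_contraction_outside_double_ball
    (m : ℕ) (hm : 1 ≤ m) (β : ℝ) (hβ0 : 0 < β) (hβ1 : β < 1) (R : ℝ) (hR : 0 < R)
    (Q : EuclideanSpace ℝ (Fin m) × EuclideanSpace ℝ (Fin m) → EuclideanSpace ℝ (Fin m))
    (p : EuclideanSpace ℝ (Fin m))
    (hdiff : ∀ q : EuclideanSpace ℝ (Fin m),
      DifferentiableAt ℝ (fun q' => Q (q', p)) q)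
    (hderβ : ∀ q : EuclideanSpace ℝ (Fin m), R < ‖q‖ →
      ‖fderiv ℝ (fun q' => Q (q', p)) q‖ ≤ β)
    (hder1 : ∀ q : EuclideanSpace ℝ (Fin m),
      ‖fderiv ℝ (fun q' => Q (q', p)) q‖ ≤ 1)
    (q₁ q₂ : EuclideanSpace ℝ (Fin m))
    (hq₁ : 2 * R < ‖q₁‖) (hq₂ : 2 * R < ‖q₂‖) :
    ‖Q (q₁, p) - Q (q₂, p)‖ ≤ (1 + β) / 2 * ‖q₁ - q₂‖ := by
  obtain ⟨f, hfdef⟩ : ∃ f : EuclideanSpace ℝ (Fin m) → EuclideanSpace ℝ (Fin m),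
    f = fun q' => Q (q', p) := ⟨_, rfl⟩
  rw [← hfdef] at hdiff hderβ hder1
  have e1 : Q (q₁, p) = f q₁ := by rw [hfdef]
  have e2 : Q (q₂, p) = f q₂ := by rw [hfdef]
  rw [e1, e2]
  obtain ⟨d, hd⟩ : ∃ d, d = q₂ - q₁ := ⟨_, rfl⟩
  have hL : ‖q₁ - q₂‖ = ‖d‖ := by rw [hd, norm_sub_rev]
  rw [hL]
  have hq2 : q₂ = q₁ + (1 : ℝ) • d := by rw [hd]; simp
  have hd0 := norm_nonneg d
  let S : Set ℝ := Set.Icc 0 1 ∩ {t : ℝ | ‖q₁ + t • d‖ ≤ R}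
  have hS : IsCompact S := isCompact_Icc.inter_right
    (isClosed_le (by fun_prop) continuous_const)
  rcases S.eq_empty_or_nonempty with hE | hN
  · have h := ray_bound_aux f hdiff q₁ d 1 β zero_le_one (fun t h0 h1 => hderβ _ (by
      by_contra hc
      have : t ∈ S := ⟨⟨h0, h1.le⟩, not_lt.1 hc⟩
      rw [hE] at this
      exact this))
    rw [← hq2, norm_sub_rev] at h
    nlinarith
  · obtain ⟨a, haS, ha⟩ := hS.exists_isLeast hN
    obtain ⟨b, hbS, hb⟩ := hS.exists_isGreatest hN
    have hab : a ≤ b := ha hbS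
    obtain ⟨⟨ha0, ha1⟩, haR⟩ := haS
    obtain ⟨⟨hb0, hb1⟩, hbR⟩ := hbS
    simp only [Set.mem_setOf_eq] at haR hbR
    have A := ray_bound_aux f hdiff q₁ d a β ha0 (fun t h0 h1 => hderβ _ (by
      by_contra hc
      have : t ∈ S := ⟨⟨h0, h1.le.trans ha1⟩, not_lt.1 hc⟩
      linarith [ha this]))
    have B := ray_bound_aux f hdiff (q₁ + a • d) d (b - a) 1 (sub_nonneg.2 hab)
      (fun t _ _ => hder1 _)
    have eB : q₁ + a • d + (b - a) • d = q₁ + b • d := by module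
    have eC : ∀ t : ℝ, q₂ + t • (-d) = q₁ + (1 - t) • d := by
      intro t; rw [hq2]; module
    have D := ray_bound_aux f hdiff q₂ (-d) (1 - b) β (sub_nonneg.2 hb1)
      (fun t h0 h1 => hderβ _ (by
        rw [eC]
        by_contra hc
        have : 1 - t ∈ S := ⟨⟨by linarith, by linarith⟩, not_lt.1 hc⟩
        linarith [hb this]))
    rw [eB] at B
    rw [eC, norm_neg, sub_sub_cancel] at D
    -- geometry
    have g1 : R ≤ a * ‖d‖ := by
      have h : ‖q₁‖ ≤ ‖q₁ + a • d‖ + ‖a • d‖ := by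
        simpa using norm_sub_le (q₁ + a • d) (a • d)
      rw [norm_smul, Real.norm_of_nonneg ha0] at h
      linarith
    have g2 : R ≤ (1 - b) * ‖d‖ := by
      have h : ‖q₂‖ ≤ ‖q₁ + b • d‖ + ‖(1 - b) • d‖ := by
        have : q₂ = (q₁ + b • d) + (1 - b) • d := by rw [hq2]; module
        rw [this]
        exact norm_add_le _ _
      rw [norm_smul, Real.norm_of_nonneg (sub_nonneg.2 hb1)] at h
      linarith
    have g3 : (b - a) * ‖d‖ ≤ 2 * R := by
      have h := norm_sub_le (q₁ + b • d) (q₁ + a • d)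
      have e : q₁ + b • d - (q₁ + a • d) = (b - a) • d := by module
      rw [e, norm_smul, Real.norm_of_nonneg (sub_nonneg.2 hab)] at h
      linarith
    have tri : ‖f q₁ - f q₂‖ ≤ ‖f (q₁ + a • d) - f q₁‖
        + ‖f (q₁ + b • d) - f (q₁ + a • d)‖ + ‖f (q₁ + b • d) - f q₂‖ := by
      have e : f q₁ - f q₂ = -(f (q₁ + a • d) - f q₁)
        + -(f (q₁ + b • d) - f (q₁ + a • d)) + (f (q₁ + b • d) - f q₂) := by abel
      rw [e]
      refine (norm_add₃_le).trans ?_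
      rw [norm_neg, norm_neg]
    have hk : 0 ≤ (1 - β) * (‖d‖ / 2 - (b - a) * ‖d‖) :=
      mul_nonneg (by linarith) (by linarith)
    linarith
end

section
/- Let m ≥ 1, R > 0 and q₁, q₂ ∈ ℝ^m with ‖q₁‖ > 2R and ‖q₂‖ > 2R. Then the Lebesgue measure of the set {t ∈ [0,1] : ‖(1−t)·q₁ + t·q₂‖ ≤ R} is at most 1/2; that is, at least half of the straight-line segment from q₁ to q₂ (in parameter length) lies outside the closed ball of radius R centered at the origin. -/
open MeasureTheory

/-- If `‖q₁‖ > 2R` and `‖q₂‖ > 2R`, then the set of parameters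
`t ∈ [0,1]` for which the point `(1−t) q₁ + t q₂` of the segment from `q₁` to `q₂` lies
in the closed ball of radius `R` has Lebesgue measure at most `1/2`. -/
theorem segment_mostly_outside_ball
    (m : ℕ) (hm : 1 ≤ m) (R : ℝ) (hR : 0 < R)
    (q₁ q₂ : EuclideanSpace ℝ (Fin m))
    (hq₁ : 2 * R < ‖q₁‖) (hq₂ : 2 * R < ‖q₂‖) :
    volume {t : ℝ | t ∈ Set.Icc (0 : ℝ) 1 ∧ ‖(1 - t) • q₁ + t • q₂‖ ≤ R} ≤ 1 / 2 := by
  have key : ∀ s t : ℝ, s ∈ Set.Icc (0 : ℝ) 1 → t ∈ Set.Icc (0 : ℝ) 1 →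
      ‖(1 - s) • q₁ + s • q₂‖ ≤ R → ‖(1 - t) • q₁ + t • q₂‖ ≤ R → s ≤ t → t - s ≤ 1 / 2 := by
    intro s t hs ht h1 h2 hst
    have a1 : ‖q₁‖ ≤ R + s * ‖q₂ - q₁‖ := by
      have e : q₁ = ((1 - s) • q₁ + s • q₂) - s • (q₂ - q₁) := by module
      have h := norm_sub_le ((1 - s) • q₁ + s • q₂) (s • (q₂ - q₁))
      rw [← e, norm_smul, Real.norm_of_nonneg hs.1] at h
      linarith
    have a2 : ‖q₂‖ ≤ R + (1 - t) * ‖q₂ - q₁‖ := by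
      have e : q₂ = ((1 - t) • q₁ + t • q₂) + (1 - t) • (q₂ - q₁) := by module
      have h := norm_add_le ((1 - t) • q₁ + t • q₂) ((1 - t) • (q₂ - q₁))
      rw [← e, norm_smul, Real.norm_of_nonneg (by linarith [ht.2])] at h
      linarith
    have a3 : (t - s) * ‖q₂ - q₁‖ ≤ 2 * R := by
      have e : (t - s) • (q₂ - q₁) =
          ((1 - t) • q₁ + t • q₂) - ((1 - s) • q₁ + s • q₂) := by module
      have h := norm_sub_le ((1 - t) • q₁ + t • q₂) ((1 - s) • q₁ + s • q₂)
      rw [← e, norm_smul, Real.norm_of_nonneg (by linarith)] at h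
      linarith
    by_contra hc
    push Not at hc
    nlinarith [norm_nonneg (q₂ - q₁)]
  refine (Real.volume_le_diam _).trans ?_
  refine Metric.ediam_le ?_
  rintro s ⟨hs, h1⟩ t ⟨ht, h2⟩
  have hd : dist s t ≤ 1 / 2 := by
    rw [Real.dist_eq, abs_le]
    rcases le_total s t with h | h
    · have := key s t hs ht h1 h2 h
      constructor <;> linarith
    · have := key t s ht hs h2 h1 h
      constructor <;> linarith
  rw [edist_dist]
  refine (ENNReal.ofReal_le_ofReal hd).trans (le_of_eq ?_)
  rw [ENNReal.ofReal_div_of_pos (by norm_num)]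
  simp
end
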